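/- Let G = (N, E) be a finite simple graph and let P_eds(G) be the ground normal logic program consisting of the graph facts together with the standard translation of: the subset rule e(X,Y) ⊆ edge(X,Y), the rules v(X) ← e(X,Y) and v(Y) ← e(X,Y), and the constraint edge(X,Y) ⇒ v(X) ∨ v(Y) (translated as c₀ ← edge(x,y), ¬v(x), ¬v(y), ¬c₀). Then the sets A = {(x,y) : e(x,y) ∈ M}, for M a stable model of P_eds(G), are exactly the edge dominating sets of G, i.e., the sets A ⊆ E such that every edge of E has at least one endpoint that is an endpoint of some edge in A. Consequently, the stable models minimizing |{(x,y) : e(x,y) ∈ M}| yield exactly the minimum-cardinality edge dominating sets of G. -/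

import Mathlib

/-- A ground normal logic program rule: head atom, positive body atoms, negated body atoms. -/
structure Rule (α : Type*) where
  head : α
  pos : Set α
  neg : Set α

/-- A fact is a rule with empty body. -/
def Rule.fact {α : Type*} (a : α) : Rule α := ⟨a, ∅, ∅⟩

/-- `I` is closed under the Gelfond–Lifschitz reduct `P^M`: for every rule of `P` whose
negated body atoms are all outside `M`, if the positive body is contained in `I` then
so is the head. -/
def ClosedUnderReduct {α : Type*} (P : Set (Rule α)) (M I : Set α) : Prop :=
  ∀ r ∈ P, (∀ c ∈ r.neg, c ∉ M) → r.pos ⊆ I → r.head ∈ I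

/-- Least model of the reduct `P^M`: the least set of atoms closed under its rules. -/
def LeastReductModel {α : Type*} (P : Set (Rule α)) (M : Set α) : Set α :=
  ⋂₀ {I | ClosedUnderReduct P M I}

/-- `M` is a stable model of `P` if it equals the least model of the reduct `P^M`. -/
def IsStableModel {α : Type*} (P : Set (Rule α)) (M : Set α) : Prop :=
  M = LeastReductModel P M

/-- Atoms of the edge-dominating-set program. -/
inductive EAtom (V : Type*) where
  | node : V → EAtom V
  | edge : V → V → EAtom V
  | e : V → V → EAtom V
  | ehat : V → V → EAtom V
  | v : V → EAtom V
  | c0 : EAtom V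

/-- The ground program `P_eds(G)`: graph facts, the translated subset rule
`e(X,Y) ⊆ edge(X,Y)` (`e(x,y) ← edge(x,y), ¬ê(x,y)`, `ê(x,y) ← edge(x,y), ¬e(x,y)`),
the rules `v(X) ← e(X,Y)` and `v(Y) ← e(X,Y)`, and the translated constraint
`c₀ ← edge(x,y), ¬v(x), ¬v(y), ¬c₀`. -/
def edsProgram {V : Type*} (G : SimpleGraph V) : Set (Rule (EAtom V)) :=
  {r | ∃ x : V, r = Rule.fact (EAtom.node x)} ∪
  {r | ∃ x y : V, G.Adj x y ∧ r = Rule.fact (EAtom.edge x y)} ∪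
  {r | ∃ x y : V, r = ⟨EAtom.e x y, {EAtom.edge x y}, {EAtom.ehat x y}⟩} ∪
  {r | ∃ x y : V, r = ⟨EAtom.ehat x y, {EAtom.edge x y}, {EAtom.e x y}⟩} ∪
  {r | ∃ x y : V, r = ⟨EAtom.v x, {EAtom.e x y}, ∅⟩} ∪
  {r | ∃ x y : V, r = ⟨EAtom.v y, {EAtom.e x y}, ∅⟩} ∪
  {r | ∃ x y : V, r = ⟨EAtom.c0, {EAtom.edge x y}, {EAtom.v x, EAtom.v y, EAtom.c0}⟩}

/-- `A` is an edge dominating set of `G`: `A` is a set of edges such that every edge of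
`G` shares an endpoint with some edge in `A`. -/
def IsEdgeDominatingSet {V : Type*} (G : SimpleGraph V) (A : Set (V × V)) : Prop :=
  A ⊆ {p : V × V | G.Adj p.1 p.2} ∧
  ∀ p : V × V, G.Adj p.1 p.2 →
    ∃ q ∈ A, p.1 = q.1 ∨ p.1 = q.2 ∨ p.2 = q.1 ∨ p.2 = q.2

/-!
`P_eds(G)` has no positive recursion, so by Fages' theorem its stable models are exactly its
supported models, i.e. the solutions of its Clark completion. The completion says that `ê` is the
complement of `e` inside the edge relation, which leaves `e` free to be any set of edges, that `v`
holds of the endpoints of the selected edges, and that `c₀` holds iff `c₀` fails and some edge is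
not covered. Hence `c₀` is false and every edge is covered.
-/

section StableModels

variable {α : Type*} {P : Set (Rule α)} {M : Set α}

/-- The body of `r` is true in the interpretation `M`. -/
def Rule.BodyHolds (r : Rule α) (M : Set α) : Prop :=
  r.pos ⊆ M ∧ ∀ c ∈ r.neg, c ∉ M

/-- `M` is a supported model of `P`, i.e. a model of the Clark completion of `P`: the atoms of `M`
are exactly the heads of the rules of `P` whose body holds in `M`. -/
def IsSupportedModel (P : Set (Rule α)) (M : Set α) : Prop :=
  ∀ a, a ∈ M ↔ ∃ r ∈ P, r.head = a ∧ r.BodyHolds M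

/-- `P` is tight: its positive dependency relation is well founded, the criterion of Fages' theorem.
For infinite programs this is stronger than the absence of positive cycles. -/
def IsTight (P : Set (Rule α)) : Prop :=
  WellFounded fun b a ↦ ∃ r ∈ P, r.head = a ∧ b ∈ r.pos

theorem isTight_of_level {β : Type*} [Preorder β] [WellFoundedLT β] (level : α → β)
    (hlevel : ∀ r ∈ P, ∀ b ∈ r.pos, level b < level r.head) : IsTight P := by
  refine Subrelation.wf ?_ (InvImage.wf level wellFounded_lt)
  rintro b _ ⟨r, hr, rfl, hb⟩
  exact hlevel r hr b hb

theorem isLeast_leastReductModel (P : Set (Rule α)) (M : Set α) :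
    IsLeast {I | ClosedUnderReduct P M I} (LeastReductModel P M) :=
  ⟨fun r hr hneg hpos I hI ↦ hI r hr hneg fun _ hb ↦ hpos hb I hI,
    fun _ hI ↦ Set.sInter_subset_of_mem hI⟩

theorem isStableModel_iff_isLeast :
    IsStableModel P M ↔ IsLeast {I | ClosedUnderReduct P M I} M := by
  rw [(isLeast_leastReductModel P M).isLeast_iff_eq, eq_comm, IsStableModel]

theorem IsStableModel.isSupportedModel (hM : IsStableModel P M) : IsSupportedModel P M := by
  obtain ⟨hclosed, hleast⟩ := isStableModel_iff_isLeast.1 hM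
  let heads : Set α := {a | ∃ r ∈ P, r.head = a ∧ r.BodyHolds M}
  have heads_subset : heads ⊆ M := by
    rintro _ ⟨r, hr, rfl, hpos, hneg⟩
    exact hclosed r hr hneg hpos
  have heads_closed : ClosedUnderReduct P M heads := fun r hr hneg hpos ↦
    ⟨r, hr, rfl, hpos.trans heads_subset, hneg⟩
  exact Set.ext_iff.1 ((hleast heads_closed).antisymm heads_subset)

theorem IsSupportedModel.isStableModel (hP : IsTight P) (hM : IsSupportedModel P M) :
    IsStableModel P M := by
  refine isStableModel_iff_isLeast.2
    ⟨fun r hr hneg hpos ↦ (hM r.head).2 ⟨r, hr, rfl, hpos, hneg⟩, fun I hI a ↦ ?_⟩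
  induction a using hP.induction with
  | _ a ih =>
    intro ha
    obtain ⟨r, hr, rfl, hpos, hneg⟩ := (hM a).1 ha
    exact hI r hr hneg fun b hb ↦ ih b ⟨r, hr, rfl, hb⟩ (hpos hb)

end StableModels

section EdgeDominatingSets

variable {V : Type*} {G : SimpleGraph V} {A : Set (V × V)} {M : Set (EAtom V)}

/-- The vertices covered by `A`, i.e. the endpoints of the edges in `A`. -/
def endpoints (A : Set (V × V)) : Set V :=
  {x | ∃ y, (x, y) ∈ A ∨ (y, x) ∈ A}

theorem isEdgeDominatingSet_iff :
    IsEdgeDominatingSet G A ↔ (∀ x y, (x, y) ∈ A → G.Adj x y) ∧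
      ∀ x y, G.Adj x y → x ∈ endpoints A ∨ y ∈ endpoints A := by
  have mem_endpoints (x : V) : x ∈ endpoints A ↔ ∃ q ∈ A, x = q.1 ∨ x = q.2 := by
    simp [endpoints, and_or_left, exists_or]
  simp only [IsEdgeDominatingSet, Set.subset_def, Set.mem_ofPred_eq, Prod.forall, mem_endpoints,
    ← exists_or, ← and_or_left, or_assoc]

/-- The edges selected by an interpretation of the edge-dominating-set program, as ordered
pairs. -/
def selectedEdges (M : Set (EAtom V)) : Set (V × V) :=
  {p | EAtom.e p.1 p.2 ∈ M}

/-- The intended interpretation of the edge-dominating-set program that selects the edges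
in `A`. -/
def edsModel (G : SimpleGraph V) (A : Set (V × V)) : Set (EAtom V) :=
  {a | match a with
    | .node _ => True
    | .edge x y => G.Adj x y
    | .e x y => (x, y) ∈ A
    | .ehat x y => G.Adj x y ∧ (x, y) ∉ A
    | .v x => x ∈ endpoints A
    | .c0 => False}

theorem selectedEdges_edsModel : selectedEdges (edsModel G A) = A :=
  rfl

theorem isTight_edsProgram (G : SimpleGraph V) : IsTight (edsProgram G) := by
  let level : EAtom V → ℕ
    | .node _ | .edge _ _ => 0
    | .e _ _ | .ehat _ _ => 1
    | .v _ | .c0 => 2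
  refine isTight_of_level level fun r hr b hb ↦ ?_
  rcases hr with (((((⟨x, rfl⟩ | ⟨x, y, -, rfl⟩) | ⟨x, y, rfl⟩) | ⟨x, y, rfl⟩) | ⟨x, y, rfl⟩) |
    ⟨x, y, rfl⟩) | ⟨x, y, rfl⟩
  all_goals simp_all [level, Rule.fact]

theorem EAtom.forall_iff {p : EAtom V → Prop} :
    (∀ a, p a) ↔ (∀ x, p (.node x)) ∧ (∀ x y, p (.edge x y)) ∧ (∀ x y, p (.e x y)) ∧
      (∀ x y, p (.ehat x y)) ∧ (∀ x, p (.v x)) ∧ p .c0 :=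
  ⟨fun h ↦ ⟨fun _ ↦ h _, fun _ _ ↦ h _, fun _ _ ↦ h _, fun _ _ ↦ h _, fun _ ↦ h _, h _⟩,
    fun ⟨hnode, hedge, he, hehat, hv, hc0⟩ a ↦
      EAtom.rec (motive := p) hnode hedge he hehat hv hc0 a⟩

theorem isSupportedModel_edsProgram_iff :
    IsSupportedModel (edsProgram G) M ↔
      (∀ x, EAtom.node x ∈ M) ∧
      (∀ x y, EAtom.edge x y ∈ M ↔ G.Adj x y) ∧
      (∀ x y, EAtom.e x y ∈ M ↔ EAtom.edge x y ∈ M ∧ EAtom.ehat x y ∉ M) ∧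
      (∀ x y, EAtom.ehat x y ∈ M ↔ EAtom.edge x y ∈ M ∧ EAtom.e x y ∉ M) ∧
      (∀ x, EAtom.v x ∈ M ↔ x ∈ endpoints (selectedEdges M)) ∧
      (EAtom.c0 ∈ M ↔ ∃ x y, EAtom.edge x y ∈ M ∧
        EAtom.v x ∉ M ∧ EAtom.v y ∉ M ∧ EAtom.c0 ∉ M) := by
  simp [IsSupportedModel, EAtom.forall_iff, edsProgram, Rule.fact, Rule.BodyHolds,
    or_and_right, and_assoc, exists_or, endpoints, selectedEdges]

theorem IsStableModel.isEdgeDominatingSet_selectedEdges (hM : IsStableModel (edsProgram G) M) :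
    IsEdgeDominatingSet G (selectedEdges M) := by
  obtain ⟨-, hedge, he, -, hv, hc0⟩ := isSupportedModel_edsProgram_iff.1 hM.isSupportedModel
  have c0_notMem : EAtom.c0 ∉ M := fun h ↦
    have ⟨_, _, _, _, _, hnot⟩ := hc0.1 h
    hnot h
  refine isEdgeDominatingSet_iff.2
    ⟨fun x y hxy ↦ (hedge x y).1 ((he x y).1 hxy).1, fun x y hxy ↦ ?_⟩
  by_contra! huncovered
  simp only [← hv] at huncovered
  exact c0_notMem (hc0.2 ⟨x, y, (hedge x y).2 hxy, huncovered.1, huncovered.2, c0_notMem⟩)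

theorem IsEdgeDominatingSet.isStableModel_edsModel (hA : IsEdgeDominatingSet G A) :
    IsStableModel (edsProgram G) (edsModel G A) := by
  obtain ⟨hsub, hdom⟩ := isEdgeDominatingSet_iff.1 hA
  refine IsSupportedModel.isStableModel (isTight_edsProgram G) ?_
  rw [isSupportedModel_edsProgram_iff, selectedEdges_edsModel]
  refine ⟨fun _ ↦ trivial, fun _ _ ↦ Iff.rfl, fun x y ↦ ?_, fun _ _ ↦ Iff.rfl, fun _ ↦ Iff.rfl,
    False.elim, ?_⟩
  · change (x, y) ∈ A ↔ G.Adj x y ∧ ¬(G.Adj x y ∧ (x, y) ∉ A)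
    have := hsub x y
    tauto
  · rintro ⟨x, y, hxy, hx, hy, -⟩
    exact (hdom x y hxy).elim hx hy

theorem isEdgeDominatingSet_iff_exists_isStableModel :
    IsEdgeDominatingSet G A ↔ ∃ M, IsStableModel (edsProgram G) M ∧ A = selectedEdges M := by
  constructor
  · exact fun hA ↦ ⟨edsModel G A, hA.isStableModel_edsModel, selectedEdges_edsModel.symm⟩
  · rintro ⟨M, hM, rfl⟩
    exact hM.isEdgeDominatingSet_selectedEdges

theorem stmt9_general {β : Type*} [LE β] (G : SimpleGraph V) (cost : Set (V × V) → β) :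
    ({A | ∃ M, IsStableModel (edsProgram G) M ∧ A = selectedEdges M} =
      {A | IsEdgeDominatingSet G A}) ∧
    ({A | ∃ M, IsStableModel (edsProgram G) M ∧
        (∀ M', IsStableModel (edsProgram G) M' →
          cost (selectedEdges M) ≤ cost (selectedEdges M')) ∧
        A = selectedEdges M} =
      {A | IsEdgeDominatingSet G A ∧ ∀ A', IsEdgeDominatingSet G A' → cost A ≤ cost A'}) := by
  simp only [isEdgeDominatingSet_iff_exists_isStableModel, true_and]
  ext A
  constructor
  · rintro ⟨M, hM, hmin, rfl⟩
    refine ⟨⟨M, hM, rfl⟩, ?_⟩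
    rintro _ ⟨M', hM', rfl⟩
    exact hmin M' hM'
  · rintro ⟨⟨M, hM, rfl⟩, hmin⟩
    exact ⟨M, hM, fun M' hM' ↦ hmin _ ⟨M', hM', rfl⟩, rfl⟩

end EdgeDominatingSets

theorem stmt9 {V : Type*} [Fintype V] (G : SimpleGraph V) :
    ({A : Set (V × V) | ∃ M : Set (EAtom V), IsStableModel (edsProgram G) M ∧
        A = {p : V × V | EAtom.e p.1 p.2 ∈ M}} =
      {A : Set (V × V) | IsEdgeDominatingSet G A}) ∧
    ({A : Set (V × V) | ∃ M : Set (EAtom V), IsStableModel (edsProgram G) M ∧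
        (∀ M' : Set (EAtom V), IsStableModel (edsProgram G) M' →
          {p : V × V | EAtom.e p.1 p.2 ∈ M}.ncard ≤ {p : V × V | EAtom.e p.1 p.2 ∈ M'}.ncard) ∧
        A = {p : V × V | EAtom.e p.1 p.2 ∈ M}} =
      {A : Set (V × V) | IsEdgeDominatingSet G A ∧
        ∀ A' : Set (V × V), IsEdgeDominatingSet G A' → A.ncard ≤ A'.ncard}) :=
  stmt9_general G Set.ncard
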